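/- Let (A,m) be a multiarrangement with a locally heavy hyperplane H_0, and let k ∈ Z be such that H_0 is also locally heavy in (A, m + k·δ_{H_0}) (where δ_{H_0} is the indicator multiplicity of H_0 and m + k·δ_{H_0} is still positive). Then (A,m) is free if and only if (A, m + k·δ_{H_0}) is free. -/

import Mathlib

open scoped Classical
open MvPolynomial

namespace ArrPaper

variable {K : Type*} [Field K] {ℓ : ℕ}

/-- The coordinate ring `S = K[x₁,…,x_ℓ]`. -/
noncomputable abbrev S (K : Type*) [Field K] (ℓ : ℕ) := MvPolynomial (Fin ℓ) K

/-- The linear form associated to a covector `c`. -/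
noncomputable def linForm (c : Fin ℓ → K) : S K ℓ :=
  ∑ i, MvPolynomial.C (c i) * MvPolynomial.X i

/-- The linear functional associated to a covector. -/
noncomputable def toFunc (c : Fin ℓ → K) : (Fin ℓ → K) →ₗ[K] K :=
  ∑ i, c i • LinearMap.proj i

/-- A (central) hyperplane arrangement, given by a finite set of nonzero,
pairwise non-proportional covectors (defining linear forms). -/
structure Arrangement (K : Type*) [Field K] (ℓ : ℕ) where
  hyps : Finset (Fin ℓ → K)
  ne_zero : ∀ c ∈ hyps, c ≠ 0
  nonparallel : ∀ c ∈ hyps, ∀ c' ∈ hyps, c ≠ c' → ∀ t : K, c' ≠ t • c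

/-- Derivations of the polynomial ring `S`. -/
abbrev Der (K : Type*) [Field K] (ℓ : ℕ) := Derivation K (S K ℓ) (S K ℓ)

/-- `θ` is a logarithmic derivation of the multiarrangement `(A, m)`, i.e.
`θ(α_H) ∈ α_H^{m(H)}·S` for all `H ∈ A`. -/
def IsLogDer (A : Arrangement K ℓ) (m : (Fin ℓ → K) → ℕ) (θ : Der K ℓ) : Prop :=
  ∀ c ∈ A.hyps, (linForm c) ^ (m c) ∣ θ (linForm c)

/-- `θ` is homogeneous of polynomial degree `d`: `θ(α)` is homogeneous of degree `d`
for every linear form `α`. -/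
def IsHomogOfDeg (θ : Der K ℓ) (d : ℕ) : Prop :=
  ∀ c : Fin ℓ → K, (θ (linForm c)).IsHomogeneous d

/-- `θ₁, …, θ_ℓ` form a basis of the `S`-module `D(A,m)`. -/
def IsDerBasis (A : Arrangement K ℓ) (m : (Fin ℓ → K) → ℕ) (θ : Fin ℓ → Der K ℓ) : Prop :=
  (∀ i, IsLogDer A m (θ i)) ∧
  ∀ η : Der K ℓ, IsLogDer A m η → ∃! f : Fin ℓ → S K ℓ, η = ∑ i, f i • θ i

/-- `(A,m)` is free with a homogeneous basis of degrees (exponents) `d`. -/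
def IsFreeWithExp (A : Arrangement K ℓ) (m : (Fin ℓ → K) → ℕ) (d : Fin ℓ → ℕ) : Prop :=
  ∃ θ : Fin ℓ → Der K ℓ, (∀ i, IsHomogOfDeg (θ i) (d i)) ∧ IsDerBasis A m θ

/-- `(A,m)` is a free multiarrangement. -/
def IsFree (A : Arrangement K ℓ) (m : (Fin ℓ → K) → ℕ) : Prop :=
  ∃ d : Fin ℓ → ℕ, IsFreeWithExp A m d

/-- `|m|`, the total multiplicity. -/
def msum (A : Arrangement K ℓ) (m : (Fin ℓ → K) → ℕ) : ℕ := ∑ c ∈ A.hyps, m c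

/-- The rank of an arrangement: the dimension of the span of its covectors. -/
noncomputable def rank (A : Arrangement K ℓ) : ℕ :=
  Module.finrank K (Submodule.span K (A.hyps : Set (Fin ℓ → K)))

/-- `A` is reducible: after a linear change of coordinates it is a product of two
arrangements in complementary (nonzero) subspaces.  In terms of covectors: the
covectors split between two complementary nonzero subspaces of the dual space. -/
def Reducible (A : Arrangement K ℓ) : Prop :=
  ∃ W₁ W₂ : Submodule K (Fin ℓ → K), W₁ ≠ ⊥ ∧ W₂ ≠ ⊥ ∧ W₁ ⊓ W₂ = ⊥ ∧ W₁ ⊔ W₂ = ⊤ ∧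
    ∀ c ∈ A.hyps, c ∈ W₁ ∨ c ∈ W₂

/-- The hyperplanes of the localization at a flat; the flat of codimension `r` is
encoded by the `r`-dimensional subspace `U` of the dual space spanned by the
covectors of the hyperplanes containing it. -/
noncomputable def locHyps (A : Arrangement K ℓ) (U : Submodule K (Fin ℓ → K)) :
    Finset (Fin ℓ → K) :=
  A.hyps.filter (· ∈ U)

/-- `U` encodes a flat of `A` of codimension `r` (an element of `L_r(A)`). -/
def IsFlatOfRank (A : Arrangement K ℓ) (U : Submodule K (Fin ℓ → K)) (r : ℕ) : Prop :=
  Module.finrank K U = r ∧ Submodule.span K (locHyps A U : Set (Fin ℓ → K)) = U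

/-- The localization `A_X` of `A` at the flat encoded by `U`. -/
noncomputable def localize (A : Arrangement K ℓ) (U : Submodule K (Fin ℓ → K)) :
    Arrangement K ℓ where
  hyps := locHyps A U
  ne_zero := fun c hc => A.ne_zero c (Finset.mem_filter.mp hc).1
  nonparallel := fun c hc c' hc' =>
    A.nonparallel c (Finset.mem_filter.mp hc).1 c' (Finset.mem_filter.mp hc').1

/-- `H₀` (given by covector `c₀`) is a heavy hyperplane of `(A,m)`. -/
def IsHeavy (A : Arrangement K ℓ) (m : (Fin ℓ → K) → ℕ) (c₀ : Fin ℓ → K) : Prop :=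
  c₀ ∈ A.hyps ∧ (∑ c ∈ A.hyps.erase c₀, m c) ≤ m c₀

/-- `H₀` (given by covector `c₀`) is a locally heavy hyperplane of `(A,m)`. -/
def IsLocallyHeavy (A : Arrangement K ℓ) (m : (Fin ℓ → K) → ℕ) (c₀ : Fin ℓ → K) : Prop :=
  c₀ ∈ A.hyps ∧ ∀ U : Submodule K (Fin ℓ → K), IsFlatOfRank A U 2 → c₀ ∈ U →
    3 ≤ (locHyps A U).card → (∑ c ∈ (locHyps A U).erase c₀, m c) ≤ m c₀

/-- `b` is the second Betti number of the rank-2 localization of `(A,m)` at `U`: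
the product of the nonzero exponents of this free rank-2 multiarrangement. -/
def IsLocalB2 (A : Arrangement K ℓ) (m : (Fin ℓ → K) → ℕ)
    (U : Submodule K (Fin ℓ → K)) (b : ℕ) : Prop :=
  ∃ d : Fin ℓ → ℕ, IsFreeWithExp (localize A U) m d ∧
    b = ∏ i ∈ Finset.univ.filter (fun i => d i ≠ 0), d i

/-- `b` is the second Betti number `b₂(A,m)` of the multiarrangement `(A,m)`. -/
def IsB2 (A : Arrangement K ℓ) (m : (Fin ℓ → K) → ℕ) (b : ℕ) : Prop :=
  ∃ bloc : Submodule K (Fin ℓ → K) → ℕ,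
    (∀ U, IsFlatOfRank A U 2 → IsLocalB2 A m U (bloc U)) ∧
    b = ∑ᶠ U ∈ {U : Submodule K (Fin ℓ → K) | IsFlatOfRank A U 2}, bloc U

/-- The second Betti number of a simple arrangement:
`b₂(A) = Σ_{X ∈ L₂(A)} (|A_X| - 1)`. -/
noncomputable def b2Simple (A : Arrangement K ℓ) : ℕ :=
  ∑ᶠ U ∈ {U : Submodule K (Fin ℓ → K) | IsFlatOfRank A U 2}, ((locHyps A U).card - 1)

/-- The Euler–Ziegler multiplicity of the restricted hyperplane `H₀ ∩ ker(c)` of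
`A^{H₀}`: `m^{H₀}(X) = |m_X| - m(H₀)`. -/
noncomputable def EZmult (A : Arrangement K ℓ) (m : (Fin ℓ → K) → ℕ)
    (c₀ c : Fin ℓ → K) : ℕ :=
  (∑ c' ∈ A.hyps.filter (· ∈ Submodule.span K ({c₀, c} : Set (Fin ℓ → K))), m c') - m c₀

/-- Two covectors are parallel (define the same hyperplane). -/
def Parallel {n : ℕ} (b b' : Fin n → K) : Prop := ∃ t : K, t ≠ 0 ∧ b' = t • b

/-- The covector on `K^n` obtained by restricting the covector `c` on `K^{n+1}` to the
hyperplane `ker c₀`, transported by the linear isomorphism `e : ker c₀ ≃ K^n`. -/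
noncomputable def resCov {n : ℕ} (c₀ : Fin (n+1) → K)
    (e : ↥(LinearMap.ker (toFunc c₀)) ≃ₗ[K] (Fin n → K)) (c : Fin (n+1) → K) :
    Fin n → K :=
  fun j => toFunc c ((e.symm (Pi.single j 1) : ↥(LinearMap.ker (toFunc c₀))) : Fin (n+1) → K)

/-- `(B, mB)` is (a model, in coordinates, of) the Euler–Ziegler restriction
`(A^{H₀}, m^{H₀})` of `(A,m)` to the hyperplane `H₀ = ker c₀ ∈ A`. -/
def IsEZRes {n : ℕ} (A : Arrangement K (n+1)) (m : (Fin (n+1) → K) → ℕ)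
    (c₀ : Fin (n+1) → K) (B : Arrangement K n) (mB : (Fin n → K) → ℕ) : Prop :=
  c₀ ∈ A.hyps ∧
  ∃ e : ↥(LinearMap.ker (toFunc c₀)) ≃ₗ[K] (Fin n → K),
    (∀ c ∈ A.hyps.erase c₀, ∃ b ∈ B.hyps,
        Parallel b (resCov c₀ e c) ∧ mB b = EZmult A m c₀ c) ∧
    (∀ b ∈ B.hyps, ∃ c ∈ A.hyps.erase c₀, Parallel b (resCov c₀ e c))

/-- A combinatorial equivalence between two arrangements: a bijection between the
hyperplanes inducing an isomorphism of intersection lattices (it preserves the rank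
of every subset of hyperplanes). -/
def CombEquiv (A A' : Arrangement K ℓ) : Prop :=
  ∃ φ : (Fin ℓ → K) → (Fin ℓ → K), Set.BijOn φ ↑A.hyps ↑A'.hyps ∧
    ∀ T : Finset (Fin ℓ → K), T ⊆ A.hyps →
      Module.finrank K (Submodule.span K (T : Set (Fin ℓ → K))) =
      Module.finrank K (Submodule.span K ((T.image φ) : Set (Fin ℓ → K)))

/-!
Let `α` be the form of `H₀`, let `D'` be the module of derivations that are logarithmic at all
hyperplanes except possibly `H₀`, and put `D₀ = {θ ∈ D' | θ(α) = 0}` and `I = {θ(α) | θ ∈ D'}`.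
None of these involves `m(H₀)`. If `H₀` is locally heavy, then `(A,m)` is free if and only if
`α ^ m(H₀) ∈ I` and `D₀` has a homogeneous basis.

Indeed, `det (θᵢ(xⱼ))` divides the defining polynomial `α ^ m(H₀) * Q'` of `(A,m)` for every basis
`θ` of `D(A,m)`, as in Saito's criterion. On `H₀`, local heaviness forces each maximal minor that
omits the column of `α` to be divisible by `Q'`: for the form `β` of another hyperplane, some
multiple of `α`, found by interpolation, agrees with `θ(β)` modulo the product of the powers of all
forms with the same trace on `H₀` as `β`. Expanding along the column of `α` then shows that some
`θᵢ(α)` is a unit times `α ^ m(H₀)`, and subtracting multiples of this `θᵢ` from the other `θⱼ`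
gives a basis of `D₀`.

It remains to see that `α ^ (k + 1) ∈ I` implies `α ^ k ∈ I` for `k ≥ m(H₀)`. By Cramer's rule on
`H₀`, a derivation with value `α ^ (k + 1)` at `α` agrees on `H₀` with a combination of the basis of
`D₀`; the difference is divisible by `α`, and the quotient has value `α ^ k`.
-/

/-! ### Homogeneous polynomials and linear forms -/

section Homogeneous

variable {σ R : Type*} [CommRing R] {a f : MvPolynomial σ R} {i d : ℕ}

lemma homogeneousComponent_mul_of_isHomogeneous (ha : a.IsHomogeneous i) (b : MvPolynomial σ R)
    (n : ℕ) : homogeneousComponent n (a * b) =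
      if i ≤ n then a * homogeneousComponent (n - i) b else 0 := by
  let := MvPolynomial.gradedAlgebra (σ := σ) (R := R)
  rw [← decomposition.decompose'_apply, ← decomposition.decompose'_apply]
  exact DirectSum.coe_decompose_mul_of_left_mem (homogeneousSubmodule σ R) n
    ((mem_homogeneousSubmodule i a).mpr ha)

lemma dvd_homogeneousComponent (ha : a.IsHomogeneous i) (h : a ∣ f) (n : ℕ) :
    a ∣ homogeneousComponent n f := by
  obtain ⟨q, rfl⟩ := h
  rw [homogeneousComponent_mul_of_isHomogeneous ha]
  split_ifs
  · exact dvd_mul_right _ _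
  · exact dvd_zero _

lemma isHomogeneous_of_mul_left [IsDomain R] (ha : a.IsHomogeneous i) (ha0 : a ≠ 0) (hf : f ≠ 0)
    (h : (a * f).IsHomogeneous d) : i ≤ d ∧ f.IsHomogeneous (d - i) := by
  have hself := homogeneousComponent_eq_self h
  rw [homogeneousComponent_mul_of_isHomogeneous ha] at hself
  split_ifs at hself with hid
  · rw [← mul_left_cancel₀ ha0 hself]
    exact ⟨hid, homogeneousComponent_isHomogeneous _ _⟩
  · exact absurd hself.symm (mul_ne_zero ha0 hf)

lemma eq_C_constantCoeff_of_isHomogeneous (hf : f.IsHomogeneous d) (h : constantCoeff f ≠ 0) :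
    d = 0 ∧ f = C (constantCoeff f) := by
  have hd : d = 0 := by
    simpa using (hf (d := 0) (by rwa [← constantCoeff_eq])).symm
  subst hd
  refine ⟨rfl, ?_⟩
  rw [constantCoeff_eq, ← homogeneousComponent_zero, homogeneousComponent_eq_self hf]

end Homogeneous

section LinearForms

lemma coeff_linForm (c : Fin ℓ → K) (i : Fin ℓ) :
    coeff (Finsupp.single i 1) (linForm c) = c i := by
  rw [linForm, coeff_sum, Finset.sum_eq_single i]
  · simp
  · intro j _ hj
    rw [coeff_C_mul, coeff_X, if_neg, mul_zero]
    rwa [Finsupp.single_left_inj one_ne_zero]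
  · simp

/-- The assignment of a linear form to a covector, as a linear map. -/
noncomputable def linFormₗ : (Fin ℓ → K) →ₗ[K] S K ℓ where
  toFun := linForm
  map_add' c c' := by simp only [linForm, Pi.add_apply, map_add, add_mul, Finset.sum_add_distrib]
  map_smul' t c := by
    simp only [linForm, Pi.smul_apply, smul_eq_mul, map_mul, mul_assoc, ← Finset.mul_sum,
      smul_eq_C_mul, RingHom.id_apply]

@[simp]
lemma linFormₗ_apply (c : Fin ℓ → K) : linFormₗ c = linForm c := rfl

lemma linForm_add (c c' : Fin ℓ → K) : linForm (c + c') = linForm c + linForm c' :=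
  map_add linFormₗ c c'

lemma linForm_smul (t : K) (c : Fin ℓ → K) : linForm (t • c) = t • linForm c :=
  map_smul linFormₗ t c

lemma linForm_single (i : Fin ℓ) : linForm (Pi.single i (1 : K)) = X i := by
  rw [linForm, Finset.sum_eq_single i]
  · simp
  · intro j _ hj
    simp [hj]
  · simp

lemma linForm_injective : Function.Injective (linForm : (Fin ℓ → K) → S K ℓ) := fun c c' h => by
  ext i
  rw [← coeff_linForm c, h, coeff_linForm]

lemma linForm_eq_zero_iff {c : Fin ℓ → K} : linForm c = 0 ↔ c = 0 :=
  map_eq_zero_iff linFormₗ linForm_injective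

lemma isHomogeneous_linForm (c : Fin ℓ → K) : (linForm c).IsHomogeneous 1 :=
  IsHomogeneous.sum _ _ _ fun i _ => by
    simpa using (isHomogeneous_C (Fin ℓ) (c i)).mul (isHomogeneous_X K i)

lemma isHomogeneous_linForm_pow (c : Fin ℓ → K) (k : ℕ) : (linForm c ^ k).IsHomogeneous k := by
  simpa using (isHomogeneous_linForm c).pow k

lemma prime_linForm {c : Fin ℓ → K} (hc : c ≠ 0) : Prime (linForm c) := by
  refine Irreducible.prime (irreducible_of_totalDegree_eq_one
    ((isHomogeneous_linForm c).totalDegree (linForm_eq_zero_iff.not.mpr hc)) fun x hx => ?_)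
  obtain ⟨i, hi⟩ := Function.ne_iff.mp hc
  refine isUnit_iff_ne_zero.mpr fun h => hi ?_
  have hxi := hx (Finsupp.single i 1)
  rwa [coeff_linForm, h, zero_dvd_iff] at hxi

lemma linForm_dvd_linForm_iff {c c' : Fin ℓ → K} :
    linForm c ∣ linForm c' ↔ ∃ t : K, c' = t • c := by
  constructor
  · rintro ⟨q, hq⟩
    refine ⟨coeff 0 q, linForm_injective ?_⟩
    rw [← homogeneousComponent_eq_self (isHomogeneous_linForm c'), hq,
      homogeneousComponent_mul_of_isHomogeneous (isHomogeneous_linForm c), if_pos le_rfl,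
      Nat.sub_self, homogeneousComponent_zero, linForm_smul, smul_eq_C_mul, mul_comm]
  · rintro ⟨t, rfl⟩
    rw [linForm_smul, smul_eq_C_mul]
    exact dvd_mul_left _ _

lemma map_linForm_congr {ι M : Type*} [AddCommGroup M] [Module K M] {f g : S K ℓ →ₗ[K] M}
    (b : Module.Basis ι K (Fin ℓ → K)) (h : ∀ j, f (linForm (b j)) = g (linForm (b j)))
    (c : Fin ℓ → K) : f (linForm c) = g (linForm c) :=
  LinearMap.congr_fun (b.ext (f₁ := f ∘ₗ linFormₗ) (f₂ := g ∘ₗ linFormₗ) h) c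

lemma map_linForm_eq_sum_repr {ι M : Type*} [Fintype ι] [AddCommGroup M] [Module K M]
    (g : S K ℓ →ₗ[K] M) (b : Module.Basis ι K (Fin ℓ → K)) (c : Fin ℓ → K) :
    g (linForm c) = ∑ j, b.repr c j • g (linForm (b j)) := by
  conv_lhs => rw [← b.sum_repr c, ← linFormₗ_apply, map_sum, map_sum]
  simp only [map_smul, linFormₗ_apply]

lemma algHom_ext_linForm {ι B : Type*} [CommRing B] [Algebra K B] {f g : S K ℓ →ₐ[K] B}
    (b : Module.Basis ι K (Fin ℓ → K)) (h : ∀ j, f (linForm (b j)) = g (linForm (b j))) :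
    f = g :=
  MvPolynomial.algHom_ext fun i => by
    rw [← linForm_single]
    exact map_linForm_congr (f := f.toLinearMap) (g := g.toLinearMap) b h _

lemma exists_basis_apply_eq {ι V : Type*} [AddCommGroup V] [Module K V]
    (b : Module.Basis ι K V) (i : ι) {v : V} (hv : v ≠ 0) :
    ∃ b' : Module.Basis ι K V, b' i = v := by
  obtain ⟨g, hg⟩ := Submodule.exists_linearEquiv_restrict_eq
    (LinearEquiv.coord K V (b i) (b.ne_zero i) ≪≫ₗ LinearEquiv.toSpanNonzeroSingleton K V v hv)
  refine ⟨b.map g, ?_⟩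
  rw [b.map_apply, ← hg ⟨b i, Submodule.mem_span_singleton_self _⟩, LinearEquiv.trans_apply,
    LinearEquiv.coord_self, LinearEquiv.toSpanNonzeroSingleton_one]

end LinearForms

/-! ### Divisibility in unique factorization domains -/

section UniqueFactorization

variable {R ι : Type*} [CommRing R] [IsDomain R] [UniqueFactorizationMonoid R] {s : Finset ι}

lemma dvd_prod_of_forall_dvd_mul_pow [DecidableEq ι] (hs : s.Nonempty) {a : ι → R}
    (ha : (s : Set ι).Pairwise (Function.onFun IsRelPrime a)) {D : R} (N : ℕ)
    (hD : ∀ i ∈ s, D ∣ a i * (∏ j ∈ s.erase i, a j) ^ N) : D ∣ ∏ i ∈ s, a i := by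
  by_cases h0 : ∏ i ∈ s, a i = 0
  · exact h0 ▸ dvd_zero D
  have hne : ∀ i ∈ s, a i ≠ 0 := Finset.prod_ne_zero_iff.mp h0
  have hD0 : D ≠ 0 := by
    obtain ⟨i, hi⟩ := hs
    refine ne_zero_of_dvd_ne_zero (mul_ne_zero (hne i hi) (pow_ne_zero N ?_)) (hD i hi)
    exact Finset.prod_ne_zero_iff.mpr fun j hj => hne j (Finset.mem_of_mem_erase hj)
  rw [UniqueFactorizationMonoid.dvd_iff_emultiplicity_le hD0]
  intro q hq
  obtain ⟨i, hi, hqi⟩ : ∃ i ∈ s, ∀ j ∈ s.erase i, ¬ q ∣ a j := by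
    by_cases h : ∃ i ∈ s, q ∣ a i
    · obtain ⟨i, hi, hqi⟩ := h
      exact ⟨i, hi, fun j hj hqj => hq.not_isUnit
        (ha hi (Finset.mem_of_mem_erase hj) (Finset.ne_of_mem_erase hj).symm hqi hqj)⟩
    · obtain ⟨i, hi⟩ := hs
      exact ⟨i, hi, fun j hj hqj => h ⟨j, Finset.mem_of_mem_erase hj, hqj⟩⟩
  have hqN : ¬ q ∣ (∏ j ∈ s.erase i, a j) ^ N := fun h => by
    obtain ⟨j, hj, hqj⟩ := (hq.dvd_finsetProd_iff _).mp (hq.dvd_of_dvd_pow h)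
    exact hqi j hj hqj
  calc emultiplicity q D
      ≤ emultiplicity q (a i * (∏ j ∈ s.erase i, a j) ^ N) :=
        emultiplicity_le_emultiplicity_of_dvd_right (hD i hi)
    _ = emultiplicity q (a i) := by
        rw [emultiplicity_mul hq, emultiplicity_eq_zero.mpr hqN, add_zero]
    _ ≤ emultiplicity q (∏ i ∈ s, a i) :=
        emultiplicity_le_emultiplicity_of_dvd_right (Finset.dvd_prod_of_mem a hi)

lemma prod_pow_dvd_of_forall_associated {p : ι → R} (hp : ∀ i ∈ s, Prime (p i)) {m : ι → ℕ}
    {D : R} (hD : ∀ i ∈ s, ∏ j ∈ s with Associated (p i) (p j), p j ^ m j ∣ D) :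
    ∏ i ∈ s, p i ^ m i ∣ D := by
  rw [← Finset.prod_fiberwise_of_maps_to (g := fun i => Associates.mk (p i))
    (fun i hi => Finset.mem_image_of_mem (fun i => Associates.mk (p i)) hi)]
  refine Finset.prod_dvd_of_isRelPrime (fun a _ b _ hab => ?_) fun a ha => ?_
  · refine IsRelPrime.prod_left fun i hi => IsRelPrime.prod_right fun j hj => ?_
    obtain ⟨his, rfl⟩ := Finset.mem_filter.mp hi
    obtain ⟨hjs, rfl⟩ := Finset.mem_filter.mp hj
    have hij : ¬ p i ∣ p j := fun h =>
      hab (Associates.mk_eq_mk_iff_associated.mpr ((hp i his).associated_of_dvd (hp j hjs) h))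
    exact ((hp i his).irreducible.isRelPrime_iff_not_dvd.mpr hij).pow_left.pow_right
  · obtain ⟨i, hi, rfl⟩ := Finset.mem_image.mp ha
    convert hD i hi using 2
    ext j
    simp [Associates.mk_eq_mk_iff_associated, Associated.comm]

end UniqueFactorization

/-! ### Interpolation by binary forms -/

section Interpolation

variable {ι : Type*} {s : Finset ι}

lemma exists_degree_lt_forall_dvd_sub {l : ι → Polynomial K} (hl : ∀ i ∈ s, (l i).Monic)
    (hcop : (s : Set ι).Pairwise (Function.onFun IsCoprime l)) (r : ι → Polynomial K) :
    ∃ G : Polynomial K, G.degree < (∑ i ∈ s, (l i).natDegree : ℕ) ∧ ∀ i ∈ s, l i ∣ G - r i := by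
  have hideal : Pairwise (Function.onFun IsCoprime fun i : s => Ideal.span {l i}) :=
    fun i j hij => (Ideal.isCoprime_span_singleton_iff _ _).mpr
      (hcop i.2 j.2 (Subtype.coe_injective.ne hij))
  obtain ⟨G, hG⟩ := Ideal.exists_forall_sub_mem_ideal hideal fun i => r i
  have hM : (∏ i ∈ s, l i).Monic := Polynomial.monic_prod_of_monic _ _ hl
  refine ⟨G %ₘ ∏ i ∈ s, l i, ?_, fun i hi => ?_⟩
  · rw [← Polynomial.natDegree_prod_of_monic _ _ hl, ← Polynomial.degree_eq_natDegree hM.ne_zero]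
    exact Polynomial.degree_modByMonic_lt _ hM
  · rw [show G %ₘ ∏ i ∈ s, l i - r i = G - r i - (∏ i ∈ s, l i) * (G /ₘ ∏ i ∈ s, l i) by
      linear_combination Polynomial.modByMonic_add_div G (∏ i ∈ s, l i)]
    exact dvd_sub (Ideal.mem_span_singleton.mp (hG ⟨i, hi⟩))
      ((Finset.dvd_prod_of_mem l hi).mul_right _)

lemma homogenize_eq_mul_X_pow {R : Type*} [CommSemiring R] {p : Polynomial R} {k n : ℕ}
    (hp : p.natDegree ≤ k) (hkn : k ≤ n) :
    p.homogenize n = p.homogenize k * X 1 ^ (n - k) := by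
  have h := Polynomial.homogenize_mul p 1 (m := k) (n := n - k) hp (by simp)
  rwa [mul_one, Nat.add_sub_cancel' hkn, Polynomial.homogenize_one] at h

lemma homogenize_X_add_C_pow (a : K) (m : ℕ) :
    ((Polynomial.X + Polynomial.C a) ^ m).homogenize m = (X 0 + C a * X 1) ^ m := by
  have h := Polynomial.homogenize_finsetProd (s := Finset.range m)
    (p := fun _ => Polynomial.X + Polynomial.C a) (n := fun _ => 1) (by simp)
  simpa [Polynomial.homogenize_X one_ne_zero] using h

lemma exists_dvd_interpolation {R : Type*} [CommRing R] [Algebra K R] {a : ι → K}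
    (ha : Set.InjOn a s) (m : ι → ℕ) {n : ℕ} (hn : ∑ i ∈ s, m i ≤ n) (x y : R) :
    ∃ g : R, x ∣ g ∧ ∀ i ∈ s, (y + a i • x) ^ m i ∣ g + a i • x ^ n := by
  have hcop : (s : Set ι).Pairwise (Function.onFun IsCoprime fun i =>
      (Polynomial.X + Polynomial.C (a i)) ^ m i) := fun i hi j hj hij => IsCoprime.pow <| by
    simpa [sub_neg_eq_add] using Polynomial.isCoprime_X_sub_C_of_isUnit_sub
      (sub_ne_zero_of_ne (neg_injective.ne (ha.ne hi hj hij))).isUnit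
  obtain ⟨G, hGdeg, hG⟩ := exists_degree_lt_forall_dvd_sub
    (fun i _ => (Polynomial.monic_X_add_C (a i)).pow (m i)) hcop fun i => -Polynomial.C (a i)
  simp only [Polynomial.natDegree_pow, Polynomial.natDegree_X_add_C, mul_one,
    sub_neg_eq_add] at hGdeg hG
  have hGn : G.degree < n := hGdeg.trans_le (by exact_mod_cast hn)
  let φ : MvPolynomial (Fin 2) K →ₐ[K] R := aeval ![y, x]
  refine ⟨φ (G.homogenize n), ?_, fun i hi => ?_⟩
  · by_cases hG0 : G = 0
    · simp [hG0]
    have hlt : G.natDegree < n := (Polynomial.natDegree_lt_iff_degree_lt hG0).mpr hGn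
    rw [homogenize_eq_mul_X_pow (Nat.le_sub_one_of_lt hlt) (Nat.sub_le n 1),
      Nat.sub_sub_self (by omega), map_mul]
    simp [φ]
  · have hdeg : (G + Polynomial.C (a i)).natDegree ≤ n := by
      rw [Polynomial.natDegree_add_C]
      exact Polynomial.natDegree_le_of_degree_le hGn.le
    have hdvd := (Polynomial.homogenize_dvd (hG i hi)).trans
      (Dvd.intro _ (homogenize_eq_mul_X_pow le_rfl hdeg).symm)
    rw [Polynomial.natDegree_pow, Polynomial.natDegree_X_add_C, mul_one,
      homogenize_X_add_C_pow] at hdvd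
    simpa [φ, Polynomial.homogenize_add, Algebra.smul_def] using map_dvd φ hdvd

end Interpolation

/-! ### Local heaviness -/

section LocallyHeavy

variable {A : Arrangement K ℓ} {m : (Fin ℓ → K) → ℕ} {c₀ c c' : Fin ℓ → K}

lemma Arrangement.not_linForm_dvd (A : Arrangement K ℓ) (hc : c ∈ A.hyps) (hc' : c' ∈ A.hyps)
    (h : c ≠ c') : ¬ linForm c ∣ linForm c' := fun hdvd => by
  obtain ⟨t, ht⟩ := linForm_dvd_linForm_iff.mp hdvd
  exact A.nonparallel c hc c' hc' h t ht

lemma Arrangement.isRelPrime_linForm_pow (A : Arrangement K ℓ) (hc : c ∈ A.hyps)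
    (hc' : c' ∈ A.hyps) (h : c ≠ c') (a b : ℕ) : IsRelPrime (linForm c ^ a) (linForm c' ^ b) :=
  ((prime_linForm (A.ne_zero c hc)).irreducible.isRelPrime_iff_not_dvd.mpr
    (A.not_linForm_dvd hc hc' h)).pow_left.pow_right

lemma Arrangement.isFlatOfRank_span_pair (A : Arrangement K ℓ) (hc₀ : c₀ ∈ A.hyps)
    (hc : c ∈ A.hyps) (h : c₀ ≠ c) : IsFlatOfRank A (Submodule.span K {c₀, c}) 2 := by
  constructor
  · have hli : LinearIndependent K ![c₀, c] := by
      rw [LinearIndependent.pair_iff' (A.ne_zero c₀ hc₀)]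
      exact fun t ht => A.nonparallel c₀ hc₀ c hc h t ht.symm
    have hrank := finrank_span_eq_card hli
    rwa [Matrix.range_cons_cons_empty, Fintype.card_fin] at hrank
  · refine le_antisymm (Submodule.span_le.mpr fun x hx => (Finset.mem_filter.mp hx).2)
      (Submodule.span_mono fun x hx => Finset.mem_coe.mpr (Finset.mem_filter.mpr
        ⟨?_, Submodule.subset_span hx⟩))
    rcases hx with rfl | rfl
    · exact hc₀
    · exact hc

lemma Arrangement.exists_add_smul_eq_smul (A : Arrangement K ℓ) (hc₀ : c₀ ∈ A.hyps)
    (hc' : c' ∈ A.hyps) (h : c₀ ≠ c') (hspan : c' ∈ Submodule.span K {c₀, c}) :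
    ∃ a t : K, t ≠ 0 ∧ c + a • c₀ = t • c' := by
  obtain ⟨r, s, rfl⟩ := Submodule.mem_span_pair.mp hspan
  have hs : s ≠ 0 := by
    rintro rfl
    exact A.nonparallel c₀ hc₀ _ hc' h r (by rw [zero_smul, add_zero])
  refine ⟨s⁻¹ * r, s⁻¹, inv_ne_zero hs, ?_⟩
  rw [smul_add, smul_smul, inv_smul_smul₀ hs, add_comm]

/-- The hyperplanes `c' ≠ c₀` of `A` with `c₀ ∩ c' = c₀ ∩ c`. -/
noncomputable def sameTrace (A : Arrangement K ℓ) (c₀ c : Fin ℓ → K) : Finset (Fin ℓ → K) :=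
  {c' ∈ A.hyps.erase c₀ | c' ∈ Submodule.span K {c₀, c}}

lemma mem_sameTrace : c' ∈ sameTrace A c₀ c ↔
    (c' ≠ c₀ ∧ c' ∈ A.hyps) ∧ c' ∈ Submodule.span K {c₀, c} := by
  rw [sameTrace, Finset.mem_filter, Finset.mem_erase]

lemma erase_locHyps_span_pair (A : Arrangement K ℓ) (c₀ c : Fin ℓ → K) :
    (locHyps A (Submodule.span K {c₀, c})).erase c₀ = sameTrace A c₀ c :=
  (Finset.filter_erase _ _ _).symm

lemma IsLocallyHeavy.sum_sameTrace_le (h : IsLocallyHeavy A m c₀) (hc : c ∈ A.hyps)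
    (hcc : c ≠ c₀) (hcard : 1 < (sameTrace A c₀ c).card) :
    ∑ c' ∈ sameTrace A c₀ c, m c' ≤ m c₀ := by
  have hmem : c₀ ∈ locHyps A (Submodule.span K {c₀, c}) :=
    Finset.mem_filter.mpr ⟨h.1, Submodule.subset_span (Set.mem_insert _ _)⟩
  rw [← erase_locHyps_span_pair] at hcard ⊢
  have hcard' := Finset.card_erase_add_one hmem
  exact h.2 _ (A.isFlatOfRank_span_pair h.1 hc hcc.symm)
    (Submodule.subset_span (Set.mem_insert _ _)) (by omega)

lemma IsLogDer.exists_prod_sameTrace_dvd_sub_of_sum_le {θ : Der K ℓ} (hθ : IsLogDer A m θ)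
    (hc₀ : c₀ ∈ A.hyps) (c : Fin ℓ → K) (hsum : ∑ c' ∈ sameTrace A c₀ c, m c' ≤ m c₀) :
    ∃ g, linForm c₀ ∣ g ∧ ∏ c' ∈ sameTrace A c₀ c, linForm c' ^ m c' ∣ θ (linForm c) - g := by
  have hmem : ∀ c' ∈ sameTrace A c₀ c, c' ∈ A.hyps := fun c' hc' => (mem_sameTrace.mp hc').1.2
  have hcoord : ∀ c' ∈ sameTrace A c₀ c, ∃ a t : K, t ≠ 0 ∧ c + a • c₀ = t • c' :=
    fun c' hc' => A.exists_add_smul_eq_smul hc₀ (hmem c' hc') (mem_sameTrace.mp hc').1.1.symm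
      (mem_sameTrace.mp hc').2
  choose! a t ht hat using hcoord
  have ha : Set.InjOn a (sameTrace A c₀ c) := fun x hx y hy hxy => by
    by_contra hne
    refine A.nonparallel x (hmem x hx) y (hmem y hy) hne ((t y)⁻¹ * t x) ?_
    rw [mul_smul, ← hat x hx, hxy, hat y hy, inv_smul_smul₀ (ht y hy)]
  obtain ⟨f, hf⟩ := hθ c₀ hc₀
  obtain ⟨g, hg₀, hg⟩ := exists_dvd_interpolation ha m hsum (linForm c₀) (linForm c)
  refine ⟨g * f, hg₀.mul_right f, Finset.prod_dvd_of_isRelPrime (fun x hx y hy hxy =>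
    A.isRelPrime_linForm_pow (hmem x hx) (hmem y hy) hxy _ _) fun c' hc' => ?_⟩
  have hlin : linForm c + a c' • linForm c₀ = t c' • linForm c' := by
    rw [← linForm_smul, ← linForm_smul, ← linForm_add, hat c' hc']
  have hval : linForm c' ^ m c' ∣ θ (linForm c) + a c' • (linForm c₀ ^ m c₀ * f) := by
    rw [← hf, ← Derivation.map_smul, ← map_add, hlin, Derivation.map_smul]
    exact dvd_smul_of_dvd _ (hθ c' (hmem c' hc'))
  have hpow : linForm c' ^ m c' ∣ g + a c' • linForm c₀ ^ m c₀ :=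
    (pow_dvd_pow_of_dvd (hlin ▸ dvd_smul_of_dvd _ dvd_rfl) _).trans (hg c' hc')
  convert dvd_sub hval (hpow.mul_right f) using 1
  rw [add_mul, smul_mul_assoc, add_sub_add_right_eq_sub]

lemma IsLocallyHeavy.exists_prod_sameTrace_dvd_sub (h : IsLocallyHeavy A m c₀) {θ : Der K ℓ}
    (hθ : IsLogDer A m θ) (hc : c ∈ A.hyps) (hcc : c ≠ c₀) :
    ∃ g, linForm c₀ ∣ g ∧ ∏ c' ∈ sameTrace A c₀ c, linForm c' ^ m c' ∣ θ (linForm c) - g := by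
  rcases lt_or_ge 1 (sameTrace A c₀ c).card with hcard | hcard
  · exact hθ.exists_prod_sameTrace_dvd_sub_of_sum_le h.1 c (h.sum_sameTrace_le hc hcc hcard)
  · have hmem : c ∈ sameTrace A c₀ c :=
      mem_sameTrace.mpr ⟨⟨hcc, hc⟩, Submodule.subset_span (Set.mem_insert_of_mem _ rfl)⟩
    have heq : sameTrace A c₀ c = {c} := Finset.eq_singleton_iff_unique_mem.mpr
      ⟨hmem, fun x hx => Finset.card_le_one.mp hcard _ hx _ hmem⟩
    refine ⟨0, dvd_zero _, ?_⟩
    rw [heq, Finset.prod_singleton, sub_zero]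
    exact hθ c hc

end LocallyHeavy

/-! ### Bases of submodules split by a linear functional -/

section IsBasisOf

variable {R M ι : Type*} [CommRing R] [AddCommGroup M] [Module R M] {N : Submodule R M}

/-- The family `v` is a basis of the submodule `N`. Unlike a `Module.Basis` of `N`, it consists of
elements of the ambient module. -/
def IsBasisOf (N : Submodule R M) (v : ι → M) : Prop :=
  LinearIndependent R v ∧ Submodule.span R (Set.range v) = N

lemma IsBasisOf.mem {v : ι → M} (hv : IsBasisOf N v) (i : ι) : v i ∈ N :=
  hv.2 ▸ Submodule.subset_span (Set.mem_range_self i)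

lemma IsBasisOf.exists_sum_eq [Fintype ι] {v : ι → M} (hv : IsBasisOf N v) {x : M} (hx : x ∈ N) :
    ∃ f : ι → R, ∑ i, f i • v i = x :=
  Submodule.mem_span_range_iff_exists_fun R |>.mp (hv.2 ▸ hx)

lemma isBasisOf_iff_existsUnique [Fintype ι] {v : ι → M} :
    IsBasisOf N v ↔ (∀ i, v i ∈ N) ∧ ∀ x ∈ N, ∃! f : ι → R, x = ∑ i, f i • v i := by
  constructor
  · intro hv
    refine ⟨hv.mem, fun x hx => ?_⟩
    obtain ⟨f, rfl⟩ := hv.exists_sum_eq hx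
    exact ⟨f, rfl, fun g hg => hv.1.fintypeLinearCombination_injective
      (by simpa only [Fintype.linearCombination_apply] using hg.symm)⟩
  · rintro ⟨hmem, hv⟩
    refine ⟨Fintype.linearIndependent_iff.mpr fun g hg => ?_, le_antisymm ?_ fun x hx => ?_⟩
    · exact congrFun ((hv 0 N.zero_mem).unique hg.symm (y₂ := 0) (by simp))
    · exact Submodule.span_le.mpr (Set.range_subset_iff.mpr hmem)
    · obtain ⟨f, hf⟩ := (hv x hx).exists
      exact (Submodule.mem_span_range_iff_exists_fun R).mpr ⟨f, hf.symm⟩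

variable {φ : M →ₗ[R] R} {n : ℕ}

open scoped nonZeroDivisors

lemma IsBasisOf.finCons {v : Fin n → M} (hv : IsBasisOf (N ⊓ LinearMap.ker φ) v) {x : M}
    (hx : x ∈ N) (hreg : φ x ∈ R⁰) (hdvd : ∀ y ∈ N, φ x ∣ φ y) :
    IsBasisOf N (Fin.cons x v : Fin (n + 1) → M) := by
  refine ⟨LinearIndependent.finCons' x v hv.1 fun c y hy hcy => ?_, ?_⟩
  · rw [hv.2] at hy
    have hφy : φ y = 0 := hy.2
    have hφ := congrArg φ hcy
    rw [map_add, map_smul, hφy, add_zero, map_zero, smul_eq_mul] at hφ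
    exact (mem_nonZeroDivisors_iff.mp hreg).2 c hφ
  · rw [Fin.range_cons]
    refine le_antisymm (Submodule.span_le.mpr (Set.insert_subset hx
      (Set.range_subset_iff.mpr fun i => (hv.mem i).1))) fun y hy => ?_
    obtain ⟨c, hc⟩ := hdvd y hy
    refine Submodule.mem_span_insert.mpr ⟨c, y - c • x, hv.2 ▸ ⟨?_, ?_⟩, by abel⟩
    · exact N.sub_mem hy (N.smul_mem c hx)
    · rw [SetLike.mem_coe, LinearMap.mem_ker, map_sub, map_smul, hc, smul_eq_mul, mul_comm,
        sub_self]

lemma sum_smul_sub_smul {κ : Type*} (s : Finset κ) (g f : κ → R) (w : κ → M) (x : M) :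
    ∑ j ∈ s, g j • (w j - f j • x) = -(∑ j ∈ s, g j * f j) • x + ∑ j ∈ s, g j • w j := by
  simp only [smul_sub, Finset.sum_sub_distrib, smul_smul, ← Finset.sum_smul]
  rw [neg_smul, neg_add_eq_sub]

lemma IsBasisOf.succAbove_sub_smul {w : Fin (n + 1) → M} (hw : IsBasisOf N w) {i₀ : Fin (n + 1)}
    (hreg : φ (w i₀) ∈ R⁰) {f : Fin n → R}
    (hf : ∀ j, φ (w (i₀.succAbove j)) = f j * φ (w i₀)) :
    IsBasisOf (N ⊓ LinearMap.ker φ) fun j => w (i₀.succAbove j) - f j • w i₀ := by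
  refine ⟨Fintype.linearIndependent_iff.mpr fun g hg j => ?_,
    le_antisymm (Submodule.span_le.mpr (Set.range_subset_iff.mpr fun j => ⟨?_, ?_⟩)) ?_⟩
  · have h0 := Fintype.linearIndependent_iff.mp hw.1
      (i₀.insertNth (-∑ j, g j * f j) g) (by
        rw [Fin.sum_univ_succAbove _ i₀]
        simp only [Fin.insertNth_apply_same, Fin.insertNth_apply_succAbove]
        rw [← sum_smul_sub_smul, hg]) (i₀.succAbove j)
    rwa [Fin.insertNth_apply_succAbove] at h0
  · exact N.sub_mem (hw.mem _) (N.smul_mem _ (hw.mem _))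
  · rw [SetLike.mem_coe, LinearMap.mem_ker, map_sub, map_smul, hf, smul_eq_mul, sub_self]
  · rintro y ⟨hyN, hyφ⟩
    obtain ⟨g, rfl⟩ := hw.exists_sum_eq hyN
    rw [SetLike.mem_coe, LinearMap.mem_ker] at hyφ
    rw [Fin.sum_univ_succAbove _ i₀] at hyφ ⊢
    have hg : g i₀ = -∑ j, g (i₀.succAbove j) * f j := by
      refine eq_neg_of_add_eq_zero_left ((mem_nonZeroDivisors_iff.mp hreg).2 _ ?_)
      rw [← hyφ, add_mul, Finset.sum_mul, map_add, map_sum]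
      simp only [map_smul, smul_eq_mul, hf, mul_assoc]
    exact (Submodule.mem_span_range_iff_exists_fun R).mpr
      ⟨fun j => g (i₀.succAbove j), by rw [hg, sum_smul_sub_smul]⟩

end IsBasisOf

/-! ### Modules of logarithmic derivations -/

section LogDer

/-- Evaluation of derivations at a linear form. -/
noncomputable def evalLinForm (c : Fin ℓ → K) : Der K ℓ →ₗ[S K ℓ] S K ℓ where
  toFun θ := θ (linForm c)
  map_add' _ _ := rfl
  map_smul' _ _ := rfl

@[simp]
lemma evalLinForm_apply (c : Fin ℓ → K) (θ : Der K ℓ) : evalLinForm c θ = θ (linForm c) := rfl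

/-- The module of derivations that are logarithmic at the hyperplanes in `s`; the module `D(A,m)`
is `logDer A.hyps m`. -/
noncomputable def logDer (s : Finset (Fin ℓ → K)) (m : (Fin ℓ → K) → ℕ) :
    Submodule (S K ℓ) (Der K ℓ) :=
  ⨅ c ∈ s, Submodule.comap (evalLinForm c) (Ideal.span {linForm c ^ m c})

/-- The derivations that are logarithmic at all hyperplanes other than `c₀` and annihilate the form
of `c₀`. -/
noncomputable def logDerKer (A : Arrangement K ℓ) (m : (Fin ℓ → K) → ℕ) (c₀ : Fin ℓ → K) :
    Submodule (S K ℓ) (Der K ℓ) :=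
  logDer (A.hyps.erase c₀) m ⊓ LinearMap.ker (evalLinForm c₀)

/-- The ideal of the values at the form of `c₀` of the derivations that are logarithmic at all
hyperplanes other than `c₀`. -/
noncomputable def valueIdeal (A : Arrangement K ℓ) (m : (Fin ℓ → K) → ℕ) (c₀ : Fin ℓ → K) :
    Ideal (S K ℓ) :=
  (logDer (A.hyps.erase c₀) m).map (evalLinForm c₀)

variable {A : Arrangement K ℓ} {s : Finset (Fin ℓ → K)} {m m' : (Fin ℓ → K) → ℕ}
  {c₀ : Fin ℓ → K} {θ : Der K ℓ}

lemma mem_logDer : θ ∈ logDer s m ↔ ∀ c ∈ s, linForm c ^ m c ∣ θ (linForm c) := by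
  simp only [logDer, Submodule.mem_iInf, Submodule.mem_comap, evalLinForm_apply,
    Ideal.mem_span_singleton]

lemma mem_logDer_iff_erase (hc₀ : c₀ ∈ s) : θ ∈ logDer s m ↔
    linForm c₀ ^ m c₀ ∣ θ (linForm c₀) ∧ θ ∈ logDer (s.erase c₀) m := by
  conv_lhs => rw [mem_logDer, ← Finset.insert_erase hc₀, Finset.forall_mem_insert]
  rw [mem_logDer]

lemma mem_logDerKer : θ ∈ logDerKer A m c₀ ↔
    θ ∈ logDer (A.hyps.erase c₀) m ∧ θ (linForm c₀) = 0 := Iff.rfl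

lemma mem_valueIdeal {f : S K ℓ} : f ∈ valueIdeal A m c₀ ↔
    ∃ θ ∈ logDer (A.hyps.erase c₀) m, θ (linForm c₀) = f := Iff.rfl

lemma logDer_inf_ker_evalLinForm (hc₀ : c₀ ∈ A.hyps) :
    logDer A.hyps m ⊓ LinearMap.ker (evalLinForm c₀) = logDerKer A m c₀ := by
  ext θ
  simp only [mem_logDerKer, Submodule.mem_inf, LinearMap.mem_ker, evalLinForm_apply,
    mem_logDer_iff_erase hc₀]
  exact ⟨fun h => ⟨h.1.2, h.2⟩, fun h => ⟨⟨h.2 ▸ dvd_zero _, h.1⟩, h.2⟩⟩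

lemma logDer_congr (h : ∀ c ∈ s, m' c = m c) : logDer s m' = logDer s m := by
  ext θ
  rw [mem_logDer, mem_logDer]
  exact forall₂_congr fun c hc => by rw [h c hc]

lemma isDerBasis_iff {θ : Fin ℓ → Der K ℓ} :
    IsDerBasis A m θ ↔ IsBasisOf (logDer A.hyps m) θ := by
  simp only [isBasisOf_iff_existsUnique, mem_logDer, IsDerBasis, IsLogDer]

/-- The module `N` of derivations has a basis of `r` homogeneous elements. -/
def HasHomogBasis (N : Submodule (S K ℓ) (Der K ℓ)) (r : ℕ) : Prop :=
  ∃ θ : Fin r → Der K ℓ, (∀ i, ∃ d, IsHomogOfDeg (θ i) d) ∧ IsBasisOf N θ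

lemma isFree_iff_hasHomogBasis : IsFree A m ↔ HasHomogBasis (logDer A.hyps m) ℓ := by
  constructor
  · rintro ⟨d, θ, hd, hθ⟩
    exact ⟨θ, fun i => ⟨d i, hd i⟩, isDerBasis_iff.mp hθ⟩
  · rintro ⟨θ, hd, hθ⟩
    choose d hd using hd
    exact ⟨d, θ, hd, isDerBasis_iff.mpr hθ⟩

lemma IsHomogOfDeg.smul {f : S K ℓ} {d e : ℕ} (hθ : IsHomogOfDeg θ d) (hf : f.IsHomogeneous e) :
    IsHomogOfDeg (f • θ) (e + d) := fun c => hf.mul (hθ c)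

lemma IsHomogOfDeg.sub {η : Der K ℓ} {d : ℕ} (hθ : IsHomogOfDeg θ d) (hη : IsHomogOfDeg η d) :
    IsHomogOfDeg (θ - η) d := fun c => (hθ c).sub (hη c)

/-- The homogeneous component of degree `k` of a derivation. -/
noncomputable def homogPart (k : ℕ) (θ : Der K ℓ) : Der K ℓ :=
  mkDerivation K fun i => homogeneousComponent k (θ (X i))

lemma homogPart_linForm (k : ℕ) (θ : Der K ℓ) (c : Fin ℓ → K) :
    homogPart k θ (linForm c) = homogeneousComponent k (θ (linForm c)) :=
  map_linForm_congr (f := (homogPart k θ).toLinearMap)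
    (g := homogeneousComponent k ∘ₗ θ.toLinearMap) (Pi.basisFun K (Fin ℓ)) (fun i => by
      simp [homogPart, linForm_single, mkDerivation_X]) c

lemma isHomogOfDeg_homogPart (k : ℕ) (θ : Der K ℓ) : IsHomogOfDeg (homogPart k θ) k := fun c => by
  rw [homogPart_linForm]
  exact homogeneousComponent_isHomogeneous _ _

lemma homogPart_mem_logDer (hθ : θ ∈ logDer s m) (k : ℕ) : homogPart k θ ∈ logDer s m :=
  mem_logDer.mpr fun c hc => by
    rw [homogPart_linForm]
    exact dvd_homogeneousComponent (isHomogeneous_linForm_pow c _) (mem_logDer.mp hθ c hc) k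

lemma exists_isHomogOfDeg_of_pow_mem_valueIdeal {k : ℕ}
    (h : linForm c₀ ^ k ∈ valueIdeal A m c₀) :
    ∃ θ ∈ logDer (A.hyps.erase c₀) m, IsHomogOfDeg θ k ∧ θ (linForm c₀) = linForm c₀ ^ k := by
  obtain ⟨θ, hθ, hval⟩ := mem_valueIdeal.mp h
  refine ⟨homogPart k θ, homogPart_mem_logDer hθ k, isHomogOfDeg_homogPart k θ, ?_⟩
  rw [homogPart_linForm, hval, homogeneousComponent_eq_self (isHomogeneous_linForm_pow c₀ k)]

end LogDer

/-! ### Determinants of bases -/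

section Determinants

/-- The defining polynomial of the hyperplanes in `s` with multiplicities `m`. -/
noncomputable def definingPoly (s : Finset (Fin ℓ → K)) (m : (Fin ℓ → K) → ℕ) : S K ℓ :=
  ∏ c ∈ s, linForm c ^ m c

lemma definingPoly_eq_mul_erase {s : Finset (Fin ℓ → K)} {c : Fin ℓ → K} (hc : c ∈ s)
    (m : (Fin ℓ → K) → ℕ) :
    definingPoly s m = linForm c ^ m c * definingPoly (s.erase c) m :=
  (Finset.mul_prod_erase s (fun c => linForm c ^ m c) hc).symm

/-- The matrix of the values of the derivations `θ i` at the linear forms of the covectors `p j`.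
For `p` the standard basis, this is the coefficient matrix of Saito's criterion. -/
noncomputable def valueMatrix {ι κ : Type*} (θ : ι → Der K ℓ) (p : κ → Fin ℓ → K) :
    Matrix ι κ (S K ℓ) :=
  Matrix.of fun i j => θ i (linForm (p j))

/-- The constant derivations dual to a basis of covectors. -/
noncomputable def dualDerivation {ι : Type*} (b : Module.Basis ι K (Fin ℓ → K)) (i : ι) :
    Der K ℓ :=
  mkDerivation K fun k => C (b.repr (Pi.single k 1) i)

variable {ι κ : Type*}

@[simp]
lemma valueMatrix_apply (θ : ι → Der K ℓ) (p : κ → Fin ℓ → K) (i : ι) (j : κ) :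
    valueMatrix θ p i j = θ i (linForm (p j)) := rfl

lemma dualDerivation_linForm (b : Module.Basis ι K (Fin ℓ → K)) (i : ι) (c : Fin ℓ → K) :
    dualDerivation b i (linForm c) = C (b.repr c i) := by
  have h : (dualDerivation b i).toLinearMap ∘ₗ linFormₗ =
      Algebra.linearMap K (S K ℓ) ∘ₗ b.coord i :=
    (Pi.basisFun K (Fin ℓ)).ext fun k => by
      simp [dualDerivation, linForm_single, mkDerivation_X, algebraMap_eq]
  exact LinearMap.congr_fun h c

variable [Fintype ι] [DecidableEq ι] {θ η : ι → Der K ℓ}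

lemma IsBasisOf.det_valueMatrix_dvd {N : Submodule (S K ℓ) (Der K ℓ)} (hθ : IsBasisOf N θ)
    (hη : ∀ i, η i ∈ N) (p : ι → Fin ℓ → K) :
    (valueMatrix θ p).det ∣ (valueMatrix η p).det := by
  choose f hf using fun i => hθ.exists_sum_eq (hη i)
  have hmul : valueMatrix η p = Matrix.of f * valueMatrix θ p := by
    ext1 i j
    rw [Matrix.mul_apply, valueMatrix_apply, ← evalLinForm_apply, ← hf i, map_sum]
    rfl
  rw [hmul, Matrix.det_mul]
  exact dvd_mul_left _ _

lemma det_valueMatrix_basis (θ : ι → Der K ℓ) (b b' : Module.Basis ι K (Fin ℓ → K)) :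
    (valueMatrix θ b').det = (valueMatrix θ b).det * C (b.det b') := by
  have hmul : valueMatrix θ b' = valueMatrix θ b * (b.toMatrix b').map C := by
    ext1 i j
    rw [valueMatrix_apply]
    exact (map_linForm_eq_sum_repr (θ i).toLinearMap b (b' j)).trans
      (Finset.sum_congr rfl fun k _ => by rw [smul_eq_C_mul, mul_comm]; rfl)
  rw [hmul, Matrix.det_mul, Module.Basis.det_apply, RingHom.map_det, RingHom.mapMatrix_apply]

lemma exists_mem_logDer_det_valueMatrix_eq (b : Module.Basis ι K (Fin ℓ → K)) (i₀ : ι)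
    (s : Finset (Fin ℓ → K)) (m : (Fin ℓ → K) → ℕ) :
    ∃ η : ι → Der K ℓ, (∀ i, η i ∈ logDer s m) ∧ (valueMatrix η b).det =
      linForm (b i₀) ^ m (b i₀) * definingPoly (s.erase (b i₀)) m ^ Fintype.card ι := by
  let q : ι → S K ℓ := fun i =>
    (if i = i₀ then linForm (b i₀) ^ m (b i₀) else 1) * definingPoly (s.erase (b i₀)) m
  have hval (i : ι) (c : Fin ℓ → K) :
      (q i • dualDerivation b i) (linForm c) = q i * C (b.repr c i) := by
    rw [Derivation.smul_apply, dualDerivation_linForm, smul_eq_mul]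
  refine ⟨fun i => q i • dualDerivation b i, fun i => mem_logDer.mpr fun c hc => ?_, ?_⟩
  · rw [hval]
    by_cases hci : c = b i₀
    · subst hci
      by_cases hi : i = i₀
      · simp only [q, if_pos hi]
        exact (dvd_mul_right _ _).mul_right _
      · rw [b.repr_self, Finsupp.single_eq_of_ne hi, map_zero, mul_zero]
        exact dvd_zero _
    · exact ((Finset.dvd_prod_of_mem (fun c => linForm c ^ m c)
        (Finset.mem_erase.mpr ⟨hci, hc⟩)).mul_left _).mul_right _
  · have hdiag : valueMatrix (fun i => q i • dualDerivation b i) b = Matrix.diagonal q := by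
      ext1 i j
      rw [valueMatrix_apply, hval, b.repr_self, Matrix.diagonal_apply, Finsupp.single_apply]
      split_ifs with h h' h' <;> simp_all
    rw [hdiag, Matrix.det_diagonal, Finset.prod_mul_distrib, Finset.prod_const, Finset.card_univ,
      Fintype.prod_ite_eq']

lemma IsBasisOf.det_valueMatrix_dvd_definingPoly {A : Arrangement K ℓ} {m : (Fin ℓ → K) → ℕ}
    {θ : Fin ℓ → Der K ℓ} (hθ : IsBasisOf (logDer A.hyps m) θ) (hA : A.hyps.Nonempty)
    (b : Module.Basis (Fin ℓ) K (Fin ℓ → K)) :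
    (valueMatrix θ b).det ∣ definingPoly A.hyps m := by
  rw [definingPoly]
  refine dvd_prod_of_forall_dvd_mul_pow hA
    (fun c hc c' hc' h => A.isRelPrime_linForm_pow hc hc' h (m c) (m c')) ℓ fun c hc => ?_
  obtain ⟨i₀, -⟩ := Function.ne_iff.mp (A.ne_zero c hc)
  obtain ⟨b', rfl⟩ := exists_basis_apply_eq b i₀ (A.ne_zero c hc)
  obtain ⟨η, hη, hdet⟩ := exists_mem_logDer_det_valueMatrix_eq b' i₀ A.hyps m
  rw [Fintype.card_fin] at hdet
  calc (valueMatrix θ b).det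
      ∣ (valueMatrix θ b').det := Dvd.intro _ (det_valueMatrix_basis θ b b').symm
    _ ∣ (valueMatrix η b').det := hθ.det_valueMatrix_dvd hη b'
    _ = linForm (b' i₀) ^ m (b' i₀) * definingPoly (A.hyps.erase (b' i₀)) m ^ ℓ := hdet

end Determinants

/-! ### Restriction to a hyperplane -/

lemma dvd_det_of_dvd_mulVec {R ι : Type*} [CommRing R] [Fintype ι] [DecidableEq ι]
    {W : Matrix ι ι R} {a : ι → R} {p : R} (h : ∀ i, p ∣ W.mulVec a i) {j : ι}
    (hj : IsUnit (a j)) : p ∣ W.det := by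
  have hadj : W.adjugate.mulVec (W.mulVec a) = W.det • a := by
    rw [Matrix.mulVec_mulVec, Matrix.adjugate_mul, Matrix.smul_mulVec, Matrix.one_mulVec]
  rw [← hj.dvd_mul_right, ← smul_eq_mul, ← Pi.smul_apply, ← hadj]
  exact Finset.dvd_sum fun i _ => (h i).mul_left _

section Restriction

variable {n : ℕ} {ι : Type*} (b : Module.Basis (Fin (n + 1)) K (Fin (n + 1) → K))

/-- The restriction of polynomials to the hyperplane `b 0`, where the forms of the covectors
`b 1, …, b n` serve as coordinates. -/
noncomputable def restrict : S K (n + 1) →ₐ[K] S K n :=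
  aeval fun i => linForm fun j => b.repr (Pi.single i 1) j.succ

/-- The section of `restrict b` that extends the coordinates of the hyperplane `b 0` by the forms
of `b 1, …, b n`. -/
noncomputable def extend : S K n →ₐ[K] S K (n + 1) :=
  aeval fun j => linForm (b j.succ)

lemma restrict_linForm (c : Fin (n + 1) → K) :
    restrict b (linForm c) = linForm fun j => b.repr c j.succ := by
  have h : (restrict b).toLinearMap ∘ₗ linFormₗ =
      linFormₗ ∘ₗ LinearMap.funLeft K K Fin.succ ∘ₗ b.equivFun.toLinearMap :=
    (Pi.basisFun K (Fin (n + 1))).ext fun k => by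
      simp only [LinearMap.comp_apply, Pi.basisFun_apply, linFormₗ_apply, linForm_single,
        AlgHom.toLinearMap_apply, restrict, aeval_X]
      rfl
  exact LinearMap.congr_fun h c

lemma restrict_linForm_zero : restrict b (linForm (b 0)) = 0 := by
  rw [restrict_linForm, linForm_eq_zero_iff]
  ext j
  simp [Fin.succ_ne_zero]

lemma restrict_linForm_succ (j : Fin n) : restrict b (linForm (b j.succ)) = X j := by
  rw [restrict_linForm, ← linForm_single]
  congr 1
  ext k
  simp [Finsupp.single_apply, Pi.single_apply, eq_comm]

lemma restrict_extend (f : S K n) : restrict b (extend b f) = f := by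
  have h : (restrict b).comp (extend b) = AlgHom.id K (S K n) :=
    MvPolynomial.algHom_ext fun j => by
      rw [AlgHom.comp_apply, extend, aeval_X, restrict_linForm_succ, AlgHom.id_apply]
  exact AlgHom.congr_fun h f

lemma linForm_dvd_sub_extend_restrict (f : S K (n + 1)) :
    linForm (b 0) ∣ f - extend b (restrict b f) := by
  let π := Ideal.Quotient.mkₐ K (Ideal.span {linForm (b 0)})
  have h : π = π.comp ((extend b).comp (restrict b)) := algHom_ext_linForm b fun i => by
    refine Fin.cases ?_ (fun j => ?_) i
    · rw [AlgHom.comp_apply, AlgHom.comp_apply, restrict_linForm_zero,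
        map_zero (extend b), map_zero π]
      exact Ideal.Quotient.eq_zero_iff_mem.mpr (Ideal.mem_span_singleton_self _)
    · rw [AlgHom.comp_apply, AlgHom.comp_apply, restrict_linForm_succ, extend, aeval_X]
  exact Ideal.mem_span_singleton.mp (Ideal.Quotient.eq.mp (AlgHom.congr_fun h f))

variable {b}

lemma restrict_eq_zero_iff {f : S K (n + 1)} : restrict b f = 0 ↔ linForm (b 0) ∣ f := by
  constructor
  · intro hf
    simpa only [hf, map_zero, sub_zero] using linForm_dvd_sub_extend_restrict b f
  · rintro ⟨g, rfl⟩
    rw [map_mul, restrict_linForm_zero, zero_mul]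

lemma constantCoeff_restrict (f : S K (n + 1)) :
    constantCoeff (restrict b f) = constantCoeff f := by
  have h : constantCoeff.comp (restrict b).toRingHom = constantCoeff :=
    MvPolynomial.ringHom_ext (fun r => by simp [restrict]) fun i => by simp [restrict, linForm]
  exact RingHom.congr_fun h f

lemma prime_restrict_linForm {c : Fin (n + 1) → K} (hc : ¬ linForm (b 0) ∣ linForm c) :
    Prime (restrict b (linForm c)) := by
  rw [← restrict_eq_zero_iff, restrict_linForm, linForm_eq_zero_iff] at hc
  rw [restrict_linForm]
  exact prime_linForm hc

lemma mem_span_pair_of_restrict_dvd {c c' : Fin (n + 1) → K}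
    (h : restrict b (linForm c) ∣ restrict b (linForm c')) :
    c' ∈ Submodule.span K {b 0, c} := by
  rw [restrict_linForm, restrict_linForm] at h
  obtain ⟨t, ht⟩ := linForm_dvd_linForm_iff.mp h
  have hzero : restrict b (linForm (c' + (-t) • c)) = 0 := by
    rw [linForm_add, linForm_smul, map_add, map_smul, restrict_linForm, restrict_linForm, ht,
      linForm_smul, neg_smul, add_neg_cancel]
  obtain ⟨s, hs⟩ := linForm_dvd_linForm_iff.mp (restrict_eq_zero_iff.mp hzero)
  exact Submodule.mem_span_pair.mpr ⟨s, t, by rw [← hs, neg_smul, neg_add_cancel_right]⟩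

lemma restrict_apply_linForm {θ : Der K (n + 1)} (hθ : linForm (b 0) ∣ θ (linForm (b 0)))
    (c : Fin (n + 1) → K) : restrict b (θ (linForm c)) =
      ∑ j : Fin n, b.repr c j.succ • restrict b (θ (linForm (b j.succ))) := by
  have h := map_linForm_eq_sum_repr ((restrict b).toLinearMap ∘ₗ θ.toLinearMap) b c
  rw [Fin.sum_univ_succ] at h
  simpa [restrict_eq_zero_iff.mpr hθ] using h

variable (b)

/-- The values of the derivations `η i` at the coordinates of the hyperplane `b 0`, restricted to
that hyperplane. -/
noncomputable def restrictedMatrix (η : ι → Der K (n + 1)) : Matrix ι (Fin n) (S K n) :=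
  (valueMatrix η fun j : Fin n => b j.succ).map (restrict b)

variable {b}

@[simp]
lemma restrictedMatrix_apply (η : ι → Der K (n + 1)) (i : ι) (j : Fin n) :
    restrictedMatrix b η i j = restrict b (η i (linForm (b j.succ))) := rfl

lemma det_restrictedMatrix (η : Fin n → Der K (n + 1)) : (restrictedMatrix b η).det =
    restrict b (valueMatrix η fun j : Fin n => b j.succ).det :=
  (AlgHom.map_det (restrict b) _).symm

lemma restrictedMatrix_mulVec {η : ι → Der K (n + 1)}
    (hη : ∀ i, linForm (b 0) ∣ η i (linForm (b 0))) (c : Fin (n + 1) → K) (i : ι) :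
    (restrictedMatrix b η).mulVec (fun j => C (b.repr c j.succ)) i =
      restrict b (η i (linForm c)) := by
  rw [restrict_apply_linForm (hη i), Matrix.mulVec, dotProduct]
  exact Finset.sum_congr rfl fun j _ => by
    rw [restrictedMatrix_apply, smul_eq_C_mul, mul_comm]

variable {A : Arrangement K (n + 1)} {m : (Fin (n + 1) → K) → ℕ}

lemma restrict_definingPoly_ne_zero (h : b 0 ∈ A.hyps) :
    restrict b (definingPoly (A.hyps.erase (b 0)) m) ≠ 0 := by
  rw [definingPoly, map_prod]
  refine Finset.prod_ne_zero_iff.mpr fun c hc => ?_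
  obtain ⟨hne, hcA⟩ := Finset.mem_erase.mp hc
  rw [map_pow]
  exact pow_ne_zero _ (prime_restrict_linForm (A.not_linForm_dvd h hcA hne.symm)).ne_zero

lemma IsLocallyHeavy.restrict_definingPoly_dvd_det (h : IsLocallyHeavy A m (b 0))
    (hm : 0 < m (b 0)) {η : Fin n → Der K (n + 1)} (hη : ∀ i, η i ∈ logDer A.hyps m) :
    restrict b (definingPoly (A.hyps.erase (b 0)) m) ∣ (restrictedMatrix b η).det := by
  have hprime : ∀ c ∈ A.hyps.erase (b 0), Prime (restrict b (linForm c)) := fun c hc =>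
    prime_restrict_linForm (A.not_linForm_dvd h.1 (Finset.mem_of_mem_erase hc)
      (Finset.ne_of_mem_erase hc).symm)
  have hη₀ (i : Fin n) : linForm (b 0) ∣ η i (linForm (b 0)) :=
    (dvd_pow_self _ hm.ne').trans (mem_logDer.mp (hη i) _ h.1)
  rw [definingPoly, map_prod]
  simp only [map_pow]
  refine prod_pow_dvd_of_forall_associated hprime fun c hc => ?_
  obtain ⟨hne, hcA⟩ := Finset.mem_erase.mp hc
  have htrace : {c' ∈ A.hyps.erase (b 0) | Associated (restrict b (linForm c))
      (restrict b (linForm c'))} ⊆ sameTrace A (b 0) c :=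
    Finset.monotone_filter_right _ fun c' _ hc' => mem_span_pair_of_restrict_dvd hc'.dvd
  refine (Finset.prod_dvd_prod_of_subset _ _ _ htrace).trans ?_
  obtain ⟨j, hj⟩ : ∃ j : Fin n, b.repr c j.succ ≠ 0 := by
    have h0 := (hprime c hc).ne_zero
    rw [restrict_linForm, Ne, linForm_eq_zero_iff] at h0
    exact Function.ne_iff.mp h0
  refine dvd_det_of_dvd_mulVec (a := fun j => C (b.repr c j.succ)) (j := j) (fun i => ?_)
    (hj.isUnit.map C)
  rw [restrictedMatrix_mulVec hη₀]
  obtain ⟨g, hg, hdvd⟩ := h.exists_prod_sameTrace_dvd_sub (mem_logDer.mp (hη i)) hcA hne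
  simpa only [map_prod, map_pow, map_sub, restrict_eq_zero_iff.mpr hg, sub_zero] using
    map_dvd (restrict b) hdvd

end Restriction

/-! ### Changing the multiplicity of a locally heavy hyperplane -/

lemma exists_vecMul_eq_of_dvd_det_updateRow {R ι : Type*} [CommRing R] [IsDomain R] [Fintype ι]
    [DecidableEq ι] {W : Matrix ι ι R} {w : ι → R} {q : R} (hq : q ≠ 0) (hW : W.det ∣ q)
    (h : ∀ i, q ∣ (W.updateRow i w).det) : ∃ c : ι → R, Matrix.vecMul c W = w := by
  choose e he using h
  obtain ⟨g, rfl⟩ := hW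
  have hcramer : Matrix.cramer W.transpose w = W.det • g • e := by
    ext i
    rw [Matrix.cramer_transpose_apply, he, mul_assoc]
    rfl
  refine ⟨g • e, smul_right_injective _ (left_ne_zero_of_mul hq) ?_⟩
  have hsolve := Matrix.mulVec_cramer W.transpose w
  rwa [hcramer, Matrix.mulVec_transpose, Matrix.det_transpose, Matrix.smul_vecMul] at hsolve

section ChangeMultiplicity

lemma exists_smul_eq_of_forall_dvd {A : Arrangement K ℓ} {m : (Fin ℓ → K) → ℕ} {c₀ : Fin ℓ → K}
    (hc₀ : c₀ ∈ A.hyps) {θ : Der K ℓ} (hθ : θ ∈ logDer (A.hyps.erase c₀) m)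
    (h : ∀ c, linForm c₀ ∣ θ (linForm c)) :
    ∃ η ∈ logDer (A.hyps.erase c₀) m, linForm c₀ • η = θ := by
  choose v hv using fun i => h (Pi.single i 1)
  have heq : linForm c₀ • mkDerivation K v = θ := MvPolynomial.derivation_ext fun i => by
    rw [Derivation.smul_apply, mkDerivation_X, smul_eq_mul, ← hv, linForm_single]
  refine ⟨mkDerivation K v, mem_logDer.mpr fun c hc => ?_, heq⟩
  obtain ⟨hcc, hcA⟩ := Finset.mem_erase.mp hc
  have hdvd := mem_logDer.mp hθ c hc
  rw [← heq, Derivation.smul_apply, smul_eq_mul, ← pow_one (linForm c₀)] at hdvd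
  exact (A.isRelPrime_linForm_pow hcA hc₀ hcc (m c) 1).dvd_of_dvd_mul_left hdvd

variable {n : ℕ} {A : Arrangement K (n + 1)} {m m' : (Fin (n + 1) → K) → ℕ}
  {c₀ : Fin (n + 1) → K} {b : Module.Basis (Fin (n + 1)) K (Fin (n + 1) → K)}

lemma logDerKer_le_logDer (hc₀ : c₀ ∈ A.hyps) : logDerKer A m c₀ ≤ logDer A.hyps m :=
  (logDer_inf_ker_evalLinForm hc₀).ge.trans inf_le_left

lemma linForm_pow_mem_nonZeroDivisors (hc₀ : c₀ ∈ A.hyps) (k : ℕ) :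
    linForm c₀ ^ k ∈ nonZeroDivisors (S K (n + 1)) :=
  mem_nonZeroDivisors_of_ne_zero (pow_ne_zero k (linForm_eq_zero_iff.not.mpr (A.ne_zero c₀ hc₀)))

lemma logDerKer_congr (h : ∀ c ∈ A.hyps, c ≠ c₀ → m' c = m c) :
    logDerKer A m' c₀ = logDerKer A m c₀ := by
  rw [logDerKer, logDerKer, logDer_congr fun c hc =>
    h c (Finset.mem_of_mem_erase hc) (Finset.ne_of_mem_erase hc)]

lemma valueIdeal_congr (h : ∀ c ∈ A.hyps, c ≠ c₀ → m' c = m c) :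
    valueIdeal A m' c₀ = valueIdeal A m c₀ := by
  rw [valueIdeal, valueIdeal, logDer_congr fun c hc =>
    h c (Finset.mem_of_mem_erase hc) (Finset.ne_of_mem_erase hc)]

lemma IsLocallyHeavy.mono (h : IsLocallyHeavy A m c₀) (hle : m c₀ ≤ m' c₀)
    (hagree : ∀ c ∈ A.hyps, c ≠ c₀ → m' c = m c) : IsLocallyHeavy A m' c₀ := by
  refine ⟨h.1, fun U hU hc₀ hcard => ?_⟩
  calc ∑ c ∈ (locHyps A U).erase c₀, m' c
      = ∑ c ∈ (locHyps A U).erase c₀, m c := Finset.sum_congr rfl fun c hc =>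
        hagree c (Finset.mem_filter.mp (Finset.mem_of_mem_erase hc)).1 (Finset.ne_of_mem_erase hc)
    _ ≤ m c₀ := h.2 U hU hc₀ hcard
    _ ≤ m' c₀ := hle

lemma IsBasisOf.sum_mul_minor_dvd {θ : Fin (n + 1) → Der K (n + 1)}
    (hθ : IsBasisOf (logDer A.hyps m) θ) (hb : b 0 ∈ A.hyps) {f : Fin (n + 1) → S K (n + 1)}
    (hf : ∀ i, θ i (linForm (b 0)) = linForm (b 0) ^ m (b 0) * f i) :
    ∑ i : Fin (n + 1), (-1) ^ (i : ℕ) * f i *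
      (valueMatrix (fun j => θ (i.succAbove j)) fun j : Fin n => b j.succ).det ∣
        definingPoly (A.hyps.erase (b 0)) m := by
  have hdvd := hθ.det_valueMatrix_dvd_definingPoly ⟨_, hb⟩ b
  rw [definingPoly_eq_mul_erase hb, Matrix.det_succ_column_zero] at hdvd
  refine (mul_dvd_mul_iff_left
    (nonZeroDivisors.ne_zero (linForm_pow_mem_nonZeroDivisors hb (m (b 0))))).mp ?_
  convert hdvd using 1
  rw [Finset.mul_sum]
  refine Finset.sum_congr rfl fun i _ => ?_
  rw [valueMatrix_apply, hf, mul_left_comm ((-1) ^ (i : ℕ)), ← mul_assoc]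
  rfl

lemma IsLocallyHeavy.exists_constantCoeff_ne_zero (h : IsLocallyHeavy A m c₀) (hm : 0 < m c₀)
    {θ : Fin (n + 1) → Der K (n + 1)} (hθ : IsBasisOf (logDer A.hyps m) θ)
    {f : Fin (n + 1) → S K (n + 1)} (hf : ∀ i, θ i (linForm c₀) = linForm c₀ ^ m c₀ * f i) :
    ∃ i, constantCoeff (f i) ≠ 0 := by
  obtain ⟨b, rfl⟩ := exists_basis_apply_eq (Pi.basisFun K (Fin (n + 1))) 0 (A.ne_zero _ h.1)
  by_contra! hcon
  choose e he using fun i : Fin (n + 1) =>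
    h.restrict_definingPoly_dvd_det hm fun j => hθ.mem (i.succAbove j)
  obtain ⟨g, hg⟩ := hθ.sum_mul_minor_dvd h.1 hf
  have hres : restrict b (definingPoly (A.hyps.erase (b 0)) m) * 1 =
      restrict b (definingPoly (A.hyps.erase (b 0)) m) *
        ((∑ i : Fin (n + 1), (-1) ^ (i : ℕ) * restrict b (f i) * e i) * restrict b g) := by
    conv_lhs => rw [mul_one, hg]
    rw [map_mul, map_sum, ← mul_assoc, Finset.mul_sum]
    refine congrArg (· * restrict b g) (Finset.sum_congr rfl fun i _ => ?_)
    rw [map_mul, ← det_restrictedMatrix, he, map_mul, map_pow, map_neg, map_one, mul_left_comm]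
  have hone := congrArg constantCoeff
    (mul_left_cancel₀ (restrict_definingPoly_ne_zero h.1) hres)
  simp [constantCoeff_restrict, hcon] at hone

lemma IsHomogOfDeg.exists_eq_pow_mul {θ : Der K ℓ} {d k : ℕ} {c : Fin ℓ → K}
    (hθ : IsHomogOfDeg θ d) (hc : c ≠ 0) (hdvd : linForm c ^ k ∣ θ (linForm c)) :
    ∃ f, θ (linForm c) = linForm c ^ k * f ∧ (f ≠ 0 → k ≤ d ∧ f.IsHomogeneous (d - k)) := by
  obtain ⟨f, hf⟩ := hdvd
  exact ⟨f, hf, fun hf0 => isHomogeneous_of_mul_left (isHomogeneous_linForm_pow c k)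
    (pow_ne_zero k (linForm_eq_zero_iff.not.mpr hc)) hf0 (hf ▸ hθ c)⟩

lemma IsLocallyHeavy.exists_apply_linForm_eq_pow_mul_C (h : IsLocallyHeavy A m c₀)
    (hm : 0 < m c₀) {θ : Fin (n + 1) → Der K (n + 1)} (hd : ∀ i, ∃ d, IsHomogOfDeg (θ i) d)
    (hθ : IsBasisOf (logDer A.hyps m) θ) :
    ∃ i, IsHomogOfDeg (θ i) (m c₀) ∧
      ∃ u : K, u ≠ 0 ∧ θ i (linForm c₀) = linForm c₀ ^ m c₀ * C u := by
  choose d hd using hd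
  choose f hf hfhom using fun i => (hd i).exists_eq_pow_mul (A.ne_zero c₀ h.1)
    (mem_logDer.mp (hθ.mem i) c₀ h.1)
  obtain ⟨i, hi⟩ := h.exists_constantCoeff_ne_zero hm hθ hf
  obtain ⟨hle, hhom⟩ := hfhom i fun h0 => hi (by rw [h0, map_zero])
  obtain ⟨hdi, hC⟩ := eq_C_constantCoeff_of_isHomogeneous hhom hi
  have hdm : d i = m c₀ := (Nat.sub_eq_zero_iff_le.mp hdi).antisymm hle
  exact ⟨i, hdm ▸ hd i, _, hi, by rw [hf i, ← hC]⟩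

lemma IsBasisOf.finCons_logDer {θ : Fin n → Der K (n + 1)} {θ₀ : Der K (n + 1)}
    (hθ : IsBasisOf (logDerKer A m c₀) θ) (hc₀ : c₀ ∈ A.hyps)
    (hθ₀ : θ₀ ∈ logDer (A.hyps.erase c₀) m)
    (hval : θ₀ (linForm c₀) = linForm c₀ ^ m c₀) :
    IsBasisOf (logDer A.hyps m) (Fin.cons θ₀ θ : Fin (n + 1) → Der K (n + 1)) := by
  rw [← logDer_inf_ker_evalLinForm hc₀] at hθ
  refine hθ.finCons ((mem_logDer_iff_erase hc₀).mpr ⟨hval ▸ dvd_rfl, hθ₀⟩) ?_ fun η hη => ?_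
  · rw [evalLinForm_apply, hval]
    exact linForm_pow_mem_nonZeroDivisors hc₀ _
  · rw [evalLinForm_apply, hval]
    exact mem_logDer.mp hη c₀ hc₀

lemma IsBasisOf.hasHomogBasis_logDerKer {θ : Fin (n + 1) → Der K (n + 1)}
    (hθ : IsBasisOf (logDer A.hyps m) θ) (hd : ∀ i, ∃ d, IsHomogOfDeg (θ i) d)
    (hc₀ : c₀ ∈ A.hyps) {i₀ : Fin (n + 1)} (hi₀ : IsHomogOfDeg (θ i₀) (m c₀)) {u : K}
    (hu : u ≠ 0) (hval : θ i₀ (linForm c₀) = linForm c₀ ^ m c₀ * C u) :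
    HasHomogBasis (logDerKer A m c₀) n := by
  choose d hd using hd
  choose f hf hfhom using fun i => (hd i).exists_eq_pow_mul (A.ne_zero c₀ hc₀)
    (mem_logDer.mp (hθ.mem i) c₀ hc₀)
  refine ⟨_, fun j => ⟨d (i₀.succAbove j), ?_⟩, logDer_inf_ker_evalLinForm hc₀ ▸
    hθ.succAbove_sub_smul (i₀ := i₀) (f := fun j => C u⁻¹ * f (i₀.succAbove j)) ?_ fun j => ?_⟩
  · refine (hd _).sub ?_
    by_cases h0 : f (i₀.succAbove j) = 0
    · rw [h0, mul_zero, zero_smul]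
      exact fun _ => isHomogeneous_zero _ _ _
    · obtain ⟨hle, hhom⟩ := hfhom _ h0
      have h := hi₀.smul ((isHomogeneous_C (Fin (n + 1)) u⁻¹).mul hhom)
      rwa [zero_add, Nat.sub_add_cancel hle] at h
  · rw [evalLinForm_apply, hval]
    exact mul_mem (linForm_pow_mem_nonZeroDivisors hc₀ _)
      (mem_nonZeroDivisors_of_ne_zero (C_ne_zero.mpr hu))
  · have hC : (C u⁻¹ : S K (n + 1)) * C u = 1 := by rw [← C_mul, inv_mul_cancel₀ hu, C_1]
    rw [evalLinForm_apply, evalLinForm_apply, hf, hval]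
    linear_combination -linForm c₀ ^ m c₀ * f (i₀.succAbove j) * hC

theorem IsLocallyHeavy.isFree_iff (h : IsLocallyHeavy A m c₀) (hm : 0 < m c₀) :
    IsFree A m ↔ linForm c₀ ^ m c₀ ∈ valueIdeal A m c₀ ∧ HasHomogBasis (logDerKer A m c₀) n := by
  rw [isFree_iff_hasHomogBasis]
  constructor
  · rintro ⟨θ, hd, hθ⟩
    obtain ⟨i₀, hi₀, u, hu, hval⟩ := h.exists_apply_linForm_eq_pow_mul_C hm hd hθ
    refine ⟨?_, hθ.hasHomogBasis_logDerKer hd h.1 hi₀ hu hval⟩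
    have hmem : linForm c₀ ^ m c₀ * C u ∈ valueIdeal A m c₀ :=
      mem_valueIdeal.mpr ⟨θ i₀, ((mem_logDer_iff_erase h.1).mp (hθ.mem i₀)).2, hval⟩
    rwa [Ideal.mul_unit_mem_iff_mem _ (hu.isUnit.map C)] at hmem
  · rintro ⟨hmem, θ, hd, hθ⟩
    obtain ⟨θ₀, hθ₀, hhom, hval⟩ := exists_isHomogOfDeg_of_pow_mem_valueIdeal hmem
    exact ⟨Fin.cons θ₀ θ, Fin.cases ⟨_, hhom⟩ hd, hθ.finCons_logDer h.1 hθ₀ hval⟩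

lemma IsBasisOf.det_valueMatrix_succ_dvd {θ : Fin n → Der K (n + 1)}
    (hθ : IsBasisOf (logDerKer A m (b 0)) θ) (hb : b 0 ∈ A.hyps) {k : ℕ}
    (hk : linForm (b 0) ^ k ∈ valueIdeal A m (b 0)) :
    (valueMatrix θ fun j : Fin n => b j.succ).det ∣ definingPoly (A.hyps.erase (b 0)) m := by
  let m₁ := Function.update m (b 0) k
  have hm₁ : m₁ (b 0) = k := Function.update_self _ _ _
  have hagree : ∀ c ∈ A.hyps, c ≠ b 0 → m₁ c = m c := fun c _ hc => Function.update_of_ne hc _ _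
  rw [← valueIdeal_congr hagree] at hk
  rw [← logDerKer_congr hagree] at hθ
  obtain ⟨θ₀, hθ₀, hval⟩ := mem_valueIdeal.mp hk
  rw [← hm₁] at hval
  have hdvd := (hθ.finCons_logDer hb hθ₀ hval).sum_mul_minor_dvd hb
    (f := Fin.cons 1 0) (Fin.cases (by simp [hval])
      fun j => by simp [(mem_logDerKer.mp (hθ.mem j)).2])
  have hpoly : definingPoly (A.hyps.erase (b 0)) m₁ = definingPoly (A.hyps.erase (b 0)) m :=
    Finset.prod_congr rfl fun c hc => by
      rw [hagree c (Finset.mem_of_mem_erase hc) (Finset.ne_of_mem_erase hc)]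
  simpa [Fin.sum_univ_succ, hpoly] using hdvd

lemma IsLocallyHeavy.exists_mem_logDerKer_forall_dvd_sub (h : IsLocallyHeavy A m (b 0))
    (hm : 0 < m (b 0)) {θ : Fin n → Der K (n + 1)}
    (hθ : IsBasisOf (logDerKer A m (b 0)) θ)
    (hdet : (valueMatrix θ fun j : Fin n => b j.succ).det ∣ definingPoly (A.hyps.erase (b 0)) m)
    {θ₀ : Der K (n + 1)} (hθ₀ : θ₀ ∈ logDer A.hyps m) :
    ∃ ξ ∈ logDerKer A m (b 0), ∀ c, linForm (b 0) ∣ (θ₀ - ξ) (linForm c) := by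
  have hmem (i : Fin n) : θ i ∈ logDer A.hyps m := logDerKer_le_logDer h.1 (hθ.mem i)
  obtain ⟨f, hf⟩ := exists_vecMul_eq_of_dvd_det_updateRow (W := restrictedMatrix b θ)
    (w := fun j => restrict b (θ₀ (linForm (b j.succ))))
    (restrict_definingPoly_ne_zero h.1 (m := m))
    (by rw [det_restrictedMatrix]; exact map_dvd _ hdet) fun i => by
      convert h.restrict_definingPoly_dvd_det hm (η := Function.update θ i θ₀) fun j => ?_
      · ext1 j k
        rcases eq_or_ne j i with rfl | hji
        · simp
        · simp [hji]
      · rcases eq_or_ne j i with rfl | hji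
        · rwa [Function.update_self]
        · rw [Function.update_of_ne hji]
          exact hmem j
  have hξ : ∑ i, extend b (f i) • θ i ∈ logDerKer A m (b 0) :=
    sum_mem fun i _ => Submodule.smul_mem _ _ (hθ.mem i)
  refine ⟨_, hξ, fun c => ?_⟩
  have hdvd : linForm (b 0) ∣ (θ₀ - ∑ i, extend b (f i) • θ i) (linForm (b 0)) := by
    rw [Derivation.sub_apply, (mem_logDerKer.mp hξ).2, sub_zero]
    exact (dvd_pow_self _ hm.ne').trans (mem_logDer.mp hθ₀ _ h.1)
  rw [← restrict_eq_zero_iff, restrict_apply_linForm hdvd]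
  refine Finset.sum_eq_zero fun j _ => ?_
  have hfj := congrFun hf j
  simp only [Matrix.vecMul, dotProduct, restrictedMatrix_apply] at hfj
  rw [← evalLinForm_apply, map_sub, map_sum, map_sub, map_sum]
  simp [restrict_extend, hfj]

lemma IsLocallyHeavy.pow_mem_valueIdeal_of_succ (h : IsLocallyHeavy A m c₀) (hm : 0 < m c₀)
    {θ : Fin n → Der K (n + 1)} (hθ : IsBasisOf (logDerKer A m c₀) θ) {k : ℕ}
    (hk : m c₀ ≤ k) (hmem : linForm c₀ ^ (k + 1) ∈ valueIdeal A m c₀) :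
    linForm c₀ ^ k ∈ valueIdeal A m c₀ := by
  obtain ⟨b, rfl⟩ := exists_basis_apply_eq (Pi.basisFun K (Fin (n + 1))) 0 (A.ne_zero _ h.1)
  obtain ⟨θ₀, hθ₀, hval⟩ := mem_valueIdeal.mp hmem
  obtain ⟨ξ, hξ, hdvd⟩ := h.exists_mem_logDerKer_forall_dvd_sub hm hθ
    (hθ.det_valueMatrix_succ_dvd h.1 hmem) ((mem_logDer_iff_erase h.1).mpr
      ⟨hval ▸ pow_dvd_pow _ (hk.trans k.le_succ), hθ₀⟩)
  obtain ⟨hξ', hξ₀⟩ := mem_logDerKer.mp hξ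
  obtain ⟨η, hη, heq⟩ := exists_smul_eq_of_forall_dvd h.1 (Submodule.sub_mem _ hθ₀ hξ') hdvd
  refine mem_valueIdeal.mpr ⟨η, hη, mul_left_cancel₀
    (nonZeroDivisors.ne_zero (pow_one (linForm (b 0)) ▸ linForm_pow_mem_nonZeroDivisors h.1 1)) ?_⟩
  rw [← smul_eq_mul, ← Derivation.smul_apply, heq, Derivation.sub_apply, hval, hξ₀, sub_zero,
    pow_succ']

lemma IsLocallyHeavy.pow_mem_valueIdeal_iff (h : IsLocallyHeavy A m c₀) (hm : 0 < m c₀)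
    {θ : Fin n → Der K (n + 1)} (hθ : IsBasisOf (logDerKer A m c₀) θ) {k : ℕ} (hk : m c₀ ≤ k) :
    linForm c₀ ^ k ∈ valueIdeal A m c₀ ↔ linForm c₀ ^ m c₀ ∈ valueIdeal A m c₀ := by
  induction k, hk using Nat.le_induction with
  | base => rfl
  | succ k hk ih =>
    rw [← ih]
    exact ⟨h.pow_mem_valueIdeal_of_succ hm hθ hk, Ideal.mem_of_dvd _ (pow_dvd_pow _ k.le_succ)⟩

theorem IsLocallyHeavy.isFree_iff_of_le (h : IsLocallyHeavy A m c₀) (hm : 0 < m c₀)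
    (hle : m c₀ ≤ m' c₀) (hagree : ∀ c ∈ A.hyps, c ≠ c₀ → m' c = m c) :
    IsFree A m ↔ IsFree A m' := by
  rw [h.isFree_iff hm, (h.mono hle hagree).isFree_iff (hm.trans_le hle), logDerKer_congr hagree,
    valueIdeal_congr hagree]
  exact and_congr_left fun ⟨_, _, hθ⟩ => (h.pow_mem_valueIdeal_iff hm hθ hle).symm

end ChangeMultiplicity

theorem stmt11 (A : Arrangement K ℓ) (m m' : (Fin ℓ → K) → ℕ)
    (hm : ∀ c ∈ A.hyps, 0 < m c) (hm' : ∀ c ∈ A.hyps, 0 < m' c)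
    (c₀ : Fin ℓ → K) (h1 : IsLocallyHeavy A m c₀) (h2 : IsLocallyHeavy A m' c₀)
    (hagree : ∀ c ∈ A.hyps, c ≠ c₀ → m' c = m c) :
    IsFree A m ↔ IsFree A m' := by
  cases ℓ with
  | zero => exact absurd (Subsingleton.elim c₀ 0) (A.ne_zero c₀ h1.1)
  | succ n =>
    rcases le_total (m c₀) (m' c₀) with hle | hle
    · exact h1.isFree_iff_of_le (hm c₀ h1.1) hle hagree
    · exact (h2.isFree_iff_of_le (hm' c₀ h2.1) hle fun c hc hne => (hagree c hc hne).symm).symm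

end ArrPaper
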